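/- For every Eulerian poset P, the cd-index Ψ(T(P)) of the Tchebyshev transform T(P) lies in the subring ℤ⟨c,2d⟩ of ℤ⟨a,b⟩ generated by c and 2d; that is, T(P) has a c-2d-index. -/

import Mathlib

open scoped TensorProduct

noncomputable section

namespace Tcheb

/-! ### The algebra `R⟨a,b⟩` of ab-polynomials -/

/-- Words in the two noncommuting letters `a` (encoded `true`) and `b` (encoded `false`). -/
abbrev ABWord : Type := FreeMonoid Bool

/-- The ring `R⟨a,b⟩` of polynomials in two noncommuting variables `a` and `b`. -/
abbrev AB (R : Type) [CommRing R] : Type := MonoidAlgebra R ABWord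

variable (R : Type) [CommRing R]

/-- The ab-monomial corresponding to a word. -/
def word (l : List Bool) : AB R := MonoidAlgebra.of R ABWord (FreeMonoid.ofList l)

/-- The variable `a`. -/
def av : AB R := word R [true]
/-- The variable `b`. -/
def bv : AB R := word R [false]
/-- `c = a + b`. -/
def cv : AB R := av R + bv R
/-- `d = ab + ba`. -/
def dv : AB R := av R * bv R + bv R * av R
/-- `a - b`. -/
def ev : AB R := av R - bv R

/-- The linear map defined by prescribing values on the basis of ab-monomials. -/
def onBasis {M : Type} [AddCommMonoid M] [Module R M] (f : List Bool → M) :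
    AB R →ₗ[R] M :=
  (Finsupp.lift M R ABWord fun w => f (FreeMonoid.toList w)) ∘ₗ
    (MonoidAlgebra.coeffLinearEquiv R).toLinearMap

/-- The algebra map `A` with `A(a) = 1`, `A(b) = 0`. -/
def Amap : AB R →ₐ[R] R :=
  MonoidAlgebra.lift R R ABWord (FreeMonoid.lift fun x => if x then (1 : R) else 0)

/-- The coproduct on `R⟨a,b⟩`: on an ab-monomial `u₁ ⋯ u_k` it is
`Σ_{i=1}^k u₁ ⋯ u_{i-1} ⊗ u_{i+1} ⋯ u_k`. -/
def Delta : AB R →ₗ[R] AB R ⊗[R] AB R :=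
  onBasis R fun w => ∑ i ∈ Finset.range w.length,
    word R (w.take i) ⊗ₜ[R] word R (w.drop (i + 1))

/-- The linear map `C(u) = 2·A(u) + Σ_u A(u₍₁₎)·A(u₍₂₎)`. -/
def Cmap : AB R →ₗ[R] R :=
  2 • (Amap R).toLinearMap +
    (LinearMap.mul' R R ∘ₗ
      TensorProduct.map (Amap R).toLinearMap (Amap R).toLinearMap) ∘ₗ Delta R

/-- `κ(u) = A(u)·(a-b)^(deg u)` on homogeneous `u`, extended linearly. -/
def kappa : AB R →ₗ[R] AB R :=
  onBasis R fun w => Amap R (word R w) • ev R ^ w.length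

/-- `ν(u) = C(u)·(a-b)^(deg u)` on homogeneous `u`, extended linearly. -/
def nuMap : AB R →ₗ[R] AB R :=
  onBasis R fun w => Cmap R (word R w) • ev R ^ w.length

end Tcheb

namespace Tcheb

/-- Cutting a word into the list of segments between the (sorted) cut positions. -/
def segments : List Bool → List ℕ → List (List Bool)
  | l, [] => [l]
  | l, i :: rest => l.take i :: segments (l.drop (i + 1)) (rest.map fun j => j - (i + 1))
  termination_by _ cuts => cuts.length
  decreasing_by simp

variable (R : Type) [CommRing R]

/-- For segments `[s₁, …, s_k]` this is `ν(s₁)·b·ν(s₂)·b ⋯ b·ν(s_{k-1})·b·κ(s_k)`. -/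
def chainProd : List (List Bool) → AB R
  | [] => 1
  | [s] => kappa R (word R s)
  | s :: rest => nuMap R (word R s) * bv R * chainProd rest

/-- The Tchebyshev transform (of the first kind) on ab-polynomials:
`T(u) = Σ_{k ≥ 1} Σ_u ν(u₍₁₎)·b·ν(u₍₂₎)·b ⋯ b·ν(u₍ₖ₋₁₎)·b·κ(u₍ₖ₎)`,
where the inner sum is over the `k`-fold coproduct.  On the ab-monomial basis this
is the sum, over all sets of positions of deleted letters, of the corresponding
products over the resulting segments. -/
def Tmap : AB R →ₗ[R] AB R :=
  onBasis R fun w => ∑ S : Finset (Fin w.length),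
    chainProd R (segments w ((S.sort (· ≤ ·)).map Fin.val))

/-- The `ω` map on a word: replace each occurrence of `ab` by `2d` and all
remaining letters by `c`. -/
def omegaWord : List Bool → AB R
  | [] => 1
  | true :: false :: rest => (2 * dv R) * omegaWord rest
  | _ :: rest => cv R * omegaWord rest

/-- The `ω` map of Billera–Ehrenborg–Readdy. -/
def omegaMap : AB R →ₗ[R] AB R := onBasis R fun w => omegaWord R w

/-- The reversal involution `u ↦ u*` of ab-polynomials. -/
def revMap : AB R →ₗ[R] AB R := onBasis R fun w => word R w.reverse

/-- `H*(1) = 0` and `H*(u·a) = H*(u·b) = u`. -/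
def Hstar : AB R →ₗ[R] AB R :=
  onBasis R fun w => if w = [] then 0 else word R w.dropLast

/-- The Tchebyshev transform of the second kind `U(u) = H*(T(u·a))`. -/
def Umap : AB R →ₗ[R] AB R := Hstar R ∘ₗ Tmap R ∘ₗ LinearMap.mulRight R (av R)

/-- `σ(u) = Σ_u κ(u₍₁₎)·b·T(u₍₂₎)`. -/
def sigmaMap : AB R →ₗ[R] AB R :=
  LinearMap.mul' R (AB R) ∘ₗ
    TensorProduct.map (LinearMap.mulRight R (bv R) ∘ₗ kappa R) (Tmap R) ∘ₗ Delta R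

/-! ### Graded posets and the ab-index -/

/-- `rk` is a rank function for a bounded poset: `rk ⊥ = 0` and covers raise rank by one. -/
def IsRankFun (α : Type) [PartialOrder α] [OrderBot α] (rk : α → ℕ) : Prop :=
  rk ⊥ = 0 ∧ ∀ x y : α, x ⋖ y → rk y = rk x + 1

/-- `f` lists the elements of a chain in increasing order with respect to the
strict order relation `lt`. -/
def IsStrictChain {α : Type} (lt : α → α → Prop) {n : ℕ} (f : Fin (n + 1) → α) : Prop :=
  ∀ i j : Fin (n + 1), i < j → lt (f i) (f j)

/-- The weight of a chain `x₀ < x₁ < ⋯ < x_k`: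
`(a-b)^{ρ(x₀,x₁)-1}·b·(a-b)^{ρ(x₁,x₂)-1}·b ⋯ b·(a-b)^{ρ(x_{k-1},x_k)-1}`. -/
def chainWt {α : Type} (rk : α → ℕ) {n : ℕ} (f : Fin (n + 1) → α) : AB R :=
  (List.intersperse (bv R)
    (List.ofFn fun i : Fin n => ev R ^ (rk (f i.succ) - rk (f i.castSucc) - 1))).prod

/-- The ab-index `Ψ` of the graded poset with strict order relation `lt`, rank
function `rk`, minimum `b` and maximum `t`: the sum of the weights of all chains
from `b` to `t`. -/
def PsiRel {α : Type} (lt : α → α → Prop) (rk : α → ℕ) (b t : α) : AB R :=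
  ∑ᶠ (n : ℕ), ∑ᶠ (f : Fin (n + 1) → α)
    (_ : IsStrictChain lt f ∧ f 0 = b ∧ f (Fin.last n) = t), chainWt R rk f

end Tcheb

namespace Tcheb

/-! ### The Tchebyshev transform of a graded poset -/

section TPoset

variable (α : Type) [PartialOrder α] [BoundedOrder α]

/-- The elements `[x,y]` of the Tchebyshev transform: intervals of `P ∪ {-1̂}`,
i.e. pairs `(x,y)` with `x ∈ P ∪ {-1̂}`, `y ∈ P` and `x < y`. -/
def TPel : Type := {p : WithBot α × α // p.1 < (p.2 : WithBot α)}

/-- The underlying set of the Tchebyshev transform `T(P)`: the intervals `[x,y]`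
together with a new maximum element (`none`). -/
def TP : Type := Option (TPel α)

/-- The cover relation of the Tchebyshev transform `T(P)`:
`[x,y] ⋖ [y,w]` and `[x,y] ⋖ [x,w]` whenever `y ⋖ w` in `P`, and `[x,1̂] ⋖ 1̂_{T(P)}`. -/
inductive TPcov : TP α → TP α → Prop
  | up {x : WithBot α} {y w : α} (h1 : x < (y : WithBot α))
      (h2 : (y : WithBot α) < (w : WithBot α)) (hc : y ⋖ w) :
      TPcov (some ⟨(x, y), h1⟩) (some ⟨((y : WithBot α), w), h2⟩)
  | same {x : WithBot α} {y w : α} (h1 : x < (y : WithBot α))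
      (h2 : x < (w : WithBot α)) (hc : y ⋖ w) :
      TPcov (some ⟨(x, y), h1⟩) (some ⟨(x, w), h2⟩)
  | top {x : WithBot α} (h1 : x < ((⊤ : α) : WithBot α)) :
      TPcov (some ⟨(x, (⊤ : α)), h1⟩) none

/-- The strict order relation of `T(P)`, generated by the cover relation. -/
def TPlt : TP α → TP α → Prop := Relation.TransGen (TPcov α)

/-- The order relation of `T(P)`, generated by the cover relation. -/
def TPle : TP α → TP α → Prop := Relation.ReflTransGen (TPcov α)

/-- The minimum element `[-1̂, 0̂]` of `T(P)`. -/
def TPbot : TP α := some ⟨((⊥ : WithBot α), (⊥ : α)), WithBot.bot_lt_coe _⟩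

/-- The maximum element `1̂_{T(P)}` of `T(P)`. -/
def TPtop : TP α := none

/-- The rank function of `T(P)`: `ρ([x,y]) = ρ(y)` and `ρ(1̂_{T(P)}) = ρ(P) + 1`. -/
def TPrk (rk : α → ℕ) : TP α → ℕ
  | some p => rk p.1.2
  | none => rk (⊤ : α) + 1

theorem TPbot_ne_TPtop : TPbot α ≠ TPtop α := Option.some_ne_none _

/-- The map `z : T(P) → P ∪ {2̂}` with `z([x,y]) = y` and `z(1̂_{T(P)}) = 2̂`. -/
def zmap : TP α → WithTop α
  | some p => (p.1.2 : WithTop α)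
  | none => ⊤

/-- The number of elements of the interval `[u,v]` of `P`, for `u, v ∈ P ∪ {2̂}`. -/
def intervalCard (u v : WithTop α) : ℕ :=
  Set.ncard {t : α | u ≤ (t : WithTop α) ∧ (t : WithTop α) ≤ v}

end TPoset

/-! ### The dual diamond product -/

/-- The strict order relation of the dual diamond product
`P ◇* Q = ((P ∖ {1̂}) × (Q ∖ {1̂})) ∪ {1̂}` (with `none` the new maximum), built from
the order relations `leA, ltA` and `leB, ltB` of the two factors. -/
def dsLT {A B : Type} (leA ltA : A → A → Prop) (leB ltB : B → B → Prop) :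
    Option (A × B) → Option (A × B) → Prop
  | some p, some q => (leA p.1 q.1 ∧ leB p.2 q.2) ∧ (ltA p.1 q.1 ∨ ltB p.2 q.2)
  | some _, none => True
  | none, _ => False

/-! ### EL-labelings -/

/-- The list of edge labels along a chain (given as a list of poset elements). -/
def labelsList {α Λ : Type} (lam : α → α → Λ) (l : List α) : List Λ :=
  (l.zip l.tail).map fun p => lam p.1 p.2

/-- `l` is a maximal (saturated) chain of the interval `[x,y]` with respect to the
cover relation `cov`: it runs from `x` to `y` and every step is a cover. -/
def IsMaxChainList {α : Type} (cov : α → α → Prop) (x y : α) (l : List α) : Prop :=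
  l.head? = some x ∧ l.getLast? = some y ∧ l.Chain' cov

/-- An `EL`-labeling of the poset whose cover relation is `cov`, with labels in the
linearly ordered set `(Λ, lle, llt)`: every interval has a unique rising maximal
chain, which moreover is lexicographically least among all maximal chains of the
interval. -/
def IsELLabeling (α Λ : Type) (lle llt : Λ → Λ → Prop)
    (cov : α → α → Prop) (lam : α → α → Λ) : Prop :=
  ∀ x y : α, Relation.ReflTransGen cov x y →
    ∃ l : List α, (IsMaxChainList cov x y l ∧ (labelsList lam l).Chain' lle) ∧
      (∀ l' : List α, IsMaxChainList cov x y l' →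
        (labelsList lam l').Chain' lle → l' = l) ∧
      (∀ l' : List α, IsMaxChainList cov x y l' →
        labelsList lam l = labelsList lam l' ∨
          List.Lex llt (labelsList lam l) (labelsList lam l'))

/-! ### Eulerian posets -/

/-- A graded poset is Eulerian if every nontrivial interval `[x,y]` has the
same number of elements of even rank as of odd rank. -/
def IsEulerian (α : Type) [PartialOrder α] (rk : α → ℕ) : Prop :=
  ∀ x y : α, x < y →
    Set.ncard {z : α | x ≤ z ∧ z ≤ y ∧ Even (rk z)} =
      Set.ncard {z : α | x ≤ z ∧ z ≤ y ∧ ¬ Even (rk z)}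

/-! ### The face lattice of the crosspolytope -/

/-- A face of the `n`-dimensional crosspolytope: a partial sign vector, i.e. the
pair `(S, ε)` of a subset `S ⊆ {1,…,n}` (the set of coordinates where the function
takes a value `some`) together with a sign function `ε` on `S`. -/
def CrossEl (n : ℕ) : Type := Fin n → Option Bool

/-- `(S,ε) ≤ (T,δ)` iff `S ⊆ T` and `δ` restricted to `S` is `ε`. -/
instance (n : ℕ) : PartialOrder (CrossEl n) where
  le f g := ∀ i s, f i = some s → g i = some s
  le_refl f i s h := h
  le_trans f g h fg gh i s hi := gh i s (fg i s hi)
  le_antisymm f g fg gf := by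
    funext i
    cases hf : f i with
    | some s => exact (fg i s hf).symm
    | none =>
      cases hg : g i with
      | some s => exact absurd (gf i s hg) (by simp [hf])
      | none => rfl

/-- The face lattice of the `n`-dimensional crosspolytope: all partial sign
vectors together with a new maximum element. -/
abbrev Cross (n : ℕ) : Type := WithTop (CrossEl n)

/-- The rank function of the face lattice of the crosspolytope:
`ρ(S,ε) = |S|` and the maximum has rank `n + 1`. -/
def crossRk (n : ℕ) : Cross n → ℕ
  | none => n + 1
  | some f => (Finset.univ.filter fun i : Fin n => (f i).isSome).card

/-- The minimal element (the empty face) of the crosspolytope face lattice. -/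
def crossBot (n : ℕ) : Cross n := WithTop.some (fun _ => none)

/-- The maximal element of the crosspolytope face lattice. -/
def crossTop (n : ℕ) : Cross n := ⊤

/-! ### Quasisymmetric functions -/

/-- The monomial quasisymmetric function `M_{(p₁,…,p_k)}`, as a formal power
series in the countably many commuting variables `t₁, t₂, …` (indexed by `ℕ`). -/
def MQ (R : Type) [CommRing R] (ps : List ℕ) : MvPowerSeries ℕ R :=
  fun m => if ((m.support.sort (· ≤ ·)).map fun i => m i) = ps then 1 else 0

/-- The `t`-part of a monomial in the variables `s` (index `none`) and
`t₁, t₂, …` (indices `some i`). -/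
def tpart (m : Option ℕ →₀ ℕ) : ℕ →₀ ℕ :=
  Finsupp.comapDomain some m (Option.some_injective ℕ).injOn

/-- The type B monomial quasisymmetric function `s^p · M_{(p₁,…,p_k)}`, a formal
power series in the variables `s` (index `none`) and `t₁, t₂, …` (indices `some i`). -/
def MB (R : Type) [CommRing R] (p : ℕ) (ps : List ℕ) : MvPowerSeries (Option ℕ) R :=
  fun m => if m none = p ∧
      (((tpart m).support.sort (· ≤ ·)).map fun i => tpart m i) = ps then 1 else 0

/-- The quasisymmetric function `F(P)` of the graded poset with strict order
relation `lt`, rank function `rk`, minimum `b` and maximum `t`: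
`F(P) = Σ_c M_{(ρ(x₀,x₁),…,ρ(x_{k-1},x_k))}` over all chains `c` from `b` to `t`. -/
def FQ (R : Type) [CommRing R] {α : Type} (lt : α → α → Prop) (rk : α → ℕ)
    (b t : α) : MvPowerSeries ℕ R :=
  ∑ᶠ (n : ℕ), ∑ᶠ (f : Fin (n + 1) → α)
    (_ : IsStrictChain lt f ∧ f 0 = b ∧ f (Fin.last n) = t),
    MQ R (List.ofFn fun i : Fin n => rk (f i.succ) - rk (f i.castSucc))

/-- The type B quasisymmetric function `F_B(P) = Σ_{0̂ < x ≤ 1̂} s^{ρ(x)-1}·F([x,1̂])`,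
written as a sum over all chains `0̂ < x₀ < x₁ < ⋯ < x_k = 1̂` of
`s^{ρ(x₀)-1}·M_{(ρ(x₀,x₁),…,ρ(x_{k-1},x_k))}`. -/
def FB (R : Type) [CommRing R] {α : Type} (lt : α → α → Prop) (rk : α → ℕ)
    (b t : α) : MvPowerSeries (Option ℕ) R :=
  ∑ᶠ (n : ℕ), ∑ᶠ (f : Fin (n + 1) → α)
    (_ : IsStrictChain lt f ∧ lt b (f 0) ∧ f (Fin.last n) = t),
    MB R (rk (f 0) - 1) (List.ofFn fun i : Fin n => rk (f i.succ) - rk (f i.castSucc))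

/-! ### Characters and the chain maps -/

/-- A character on `k⟨a,b⟩`: a linear functional which is multiplicative with
respect to Cartesian products of graded posets (of rank at least 1). -/
def IsCharacter (k : Type) [Field k] (G : AB k →ₗ[k] k) : Prop :=
  ∀ (α β : Type) [Fintype α] [Fintype β] [PartialOrder α] [PartialOrder β]
    [BoundedOrder α] [BoundedOrder β], ∀ (rkα : α → ℕ) (rkβ : β → ℕ),
    IsRankFun α rkα → IsRankFun β rkβ → 1 ≤ rkα ⊤ → 1 ≤ rkβ ⊤ →
    G (PsiRel k (· < ·) (fun p : α × β => rkα p.1 + rkβ p.2)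
        ((⊥ : α), (⊥ : β)) ((⊤ : α), (⊤ : β))) =
      G (PsiRel k (· < ·) rkα ⊥ ⊤) * G (PsiRel k (· < ·) rkβ ⊥ ⊤)

/-- The quasisymmetric function image `g̃F(P)` of the chain map of the second kind:
`Σ_c G(Ψ([x₀,x₁])) ⋯ G(Ψ([x_{k-1},x_k])) · M_{(ρ(x₀,x₁),…,ρ(x_{k-1},x_k))}`,
summed over all chains `c = {b = x₀ < ⋯ < x_k = t}`. -/
def gtF (k : Type) [Field k] (G : AB k →ₗ[k] k) {α : Type} (lt : α → α → Prop)
    (rk : α → ℕ) (b t : α) : MvPowerSeries ℕ k :=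
  ∑ᶠ (n : ℕ), ∑ᶠ (f : Fin (n + 1) → α)
    (_ : IsStrictChain lt f ∧ f 0 = b ∧ f (Fin.last n) = t),
    (∏ i : Fin n, G (PsiRel k lt rk (f i.castSucc) (f i.succ))) •
      MQ k (List.ofFn fun i : Fin n => rk (f i.succ) - rk (f i.castSucc))

/-- The type B quasisymmetric function image `gF_B(P) = Σ_{0̂ < x ≤ 1̂}
s^{ρ(x)-1}·g̃F([x,1̂])` of the chain map of the first kind, written as a sum over
all chains `0̂ < x₀ < ⋯ < x_k = 1̂`. -/
def gFB (k : Type) [Field k] (G : AB k →ₗ[k] k) {α : Type} (lt : α → α → Prop)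
    (rk : α → ℕ) (b t : α) : MvPowerSeries (Option ℕ) k :=
  ∑ᶠ (n : ℕ), ∑ᶠ (f : Fin (n + 1) → α)
    (_ : IsStrictChain lt f ∧ lt b (f 0) ∧ f (Fin.last n) = t),
    (∏ i : Fin n, G (PsiRel k lt rk (f i.castSucc) (f i.succ))) •
      MB k (rk (f 0) - 1) (List.ofFn fun i : Fin n => rk (f i.succ) - rk (f i.castSucc))

/-- The space of homogeneous ab-polynomials of degree `n`. -/
def ABhomog (k : Type) [Field k] (n : ℕ) : Submodule k (AB k) :=
  Submodule.span k {x : AB k | ∃ w : List Bool, w.length = n ∧ x = word k w}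

/-!
Write `g(y)` for the ab-index of the interval `[[x,y], 1̂]` of `T(P)` and `e = a - b`. For `y < w`
the elements `[x',w]` of `T(P)` above `[x,y]` are as many as the elements of the interval `[y,w]`
of `P`, so cutting a chain at its second element gives
`g(y) = e^ρ(y,1̂) + ∑_{w > y} #[y,w] · e^(ρ(y,w)-1) b g(w)`,
and `g` does not depend on `x`. Möbius inversion, with `μ(y,w) = (-1)^ρ(y,w)`, turns this into
`∑_{w ≥ y} (-e)^ρ(y,w) g(w) = [y = 1̂] + ∑_{w > y} (1 - (-1)^ρ(y,w)) e^(ρ(y,w)-1) b g(w)`.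
Solving for `g(y)`, the terms at even distance contribute `-e^ρ(y,w) g(w)` and those at odd distance
`e^(ρ(y,w)-1) (e + 2b) g(w)`. Only even powers of `e` are left, so descending induction on `y` puts
`g(y)` into the ring generated by `e² = c² - 2d` and `e + 2b = c`.
-/

/-! ### Recursion for the ab-index -/

section ChainSums

variable (R : Type) [CommRing R] {T : Type} (lt : T → T → Prop) (rk : T → ℕ) {n : ℕ} {x t : T}

/-- The sum of the weights of the chains `x = x₀ < x₁ < ⋯ < xₙ = t`: the part of `PsiRel` coming
from the chains with `n` steps. -/
def chainSum (n : ℕ) (x t : T) : AB R :=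
  ∑ᶠ (f : Fin (n + 1) → T) (_ : IsStrictChain lt f ∧ f 0 = x ∧ f (Fin.last n) = t),
    chainWt R rk f

theorem chainWt_cons (f : Fin (n + 1) → T) :
    chainWt R rk (Fin.cons x f : Fin (n + 2) → T) =
      ev R ^ (rk (f 0) - rk x - 1) * (if n = 0 then 1 else bv R) * chainWt R rk f := by
  cases n with
  | zero => simp [chainWt]
  | succ n =>
    rw [chainWt, chainWt, List.ofFn_succ, List.ofFn_succ, List.ofFn_succ, if_neg n.succ_ne_zero]
    simp only [List.intersperse_cons_cons, List.prod_cons, mul_assoc]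
    rfl

open Classical in
theorem chainSum_eq_sum [Fintype T] (n : ℕ) (x t : T) :
    chainSum R lt rk n x t =
      ∑ f : Fin (n + 1) → T with IsStrictChain lt f ∧ f 0 = x ∧ f (Fin.last n) = t,
        chainWt R rk f := by
  rw [chainSum, finsum_eq_sum_of_fintype, Finset.sum_filter]
  exact Finset.sum_congr rfl fun f _ => finsum_eq_if

open Classical in
theorem chainSum_zero (x t : T) : chainSum R lt rk 0 x t = if x = t then 1 else 0 := by
  simp_rw [chainSum, finsum_eq_if]
  rw [finsum_eq_single _ fun _ => x]
  · simp [IsStrictChain, chainWt]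
  · exact fun f hf => if_neg fun h => hf (funext fun i => Fin.eq_zero i ▸ h.2.1)

variable {lt} in
theorem IsStrictChain.injective [Std.Irrefl lt] {f : Fin (n + 1) → T} (hf : IsStrictChain lt f) :
    Function.Injective f := by
  intro i j hij
  by_contra hne
  rcases lt_or_gt_of_ne hne with h | h
  · exact irrefl_of lt _ (hij ▸ hf i j h)
  · exact irrefl_of lt _ (hij ▸ hf j i h)

theorem chainSum_succ_self [Std.Irrefl lt] : chainSum R lt rk (n + 1) t t = 0 := by
  classical
  simp_rw [chainSum, finsum_eq_if]
  exact finsum_eq_zero_of_forall_eq_zero fun f => if_neg fun ⟨hf, h0, hlast⟩ =>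
    absurd (hf.injective (h0.trans hlast.symm)) Fin.last_pos.ne

theorem chainSum_eq_zero_of_card_le [Fintype T] [Std.Irrefl lt] (hn : Fintype.card T ≤ n) :
    chainSum R lt rk n x t = 0 := by
  classical
  simp_rw [chainSum, finsum_eq_if]
  exact finsum_eq_zero_of_forall_eq_zero fun f => if_neg fun ⟨hf, _⟩ =>
    absurd hn (by simpa using Fintype.card_le_of_injective f hf.injective)

variable {lt} in
theorem isStrictChain_cons [IsTrans T lt] {f : Fin (n + 1) → T} :
    IsStrictChain lt (Fin.cons x f : Fin (n + 2) → T) ↔ lt x (f 0) ∧ IsStrictChain lt f := by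
  have hcons : IsStrictChain lt (Fin.cons x f : Fin (n + 2) → T) ↔
      (∀ j, lt x (f j)) ∧ IsStrictChain lt f := by
    simp [IsStrictChain, Fin.forall_fin_succ (n := n + 1)]
  refine hcons.trans (and_congr_left fun hf => ⟨fun h => h 0, fun h j => ?_⟩)
  rcases eq_or_ne j 0 with rfl | hj
  · exact h
  · exact trans_of lt h (hf 0 j (Fin.pos_of_ne_zero hj))

variable [Fintype T]

open Classical in
theorem chainSum_succ [IsTrans T lt] :
    chainSum R lt rk (n + 1) x t =
      ∑ z with lt x z, ev R ^ (rk z - rk x - 1) * (if n = 0 then 1 else bv R) *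
        chainSum R lt rk n z t := by
  have hleft : chainSum R lt rk (n + 1) x t =
      ∑ f : Fin (n + 1) → T, if lt x (f 0) ∧ IsStrictChain lt f ∧ f (Fin.last n) = t then
        chainWt R rk (Fin.cons x f : Fin (n + 2) → T) else 0 := by
    rw [chainSum_eq_sum, Finset.sum_filter,
      ← Fintype.sum_equiv (Fin.consEquiv fun _ => T) _ _ fun _ => rfl,
      Fintype.sum_prod_type, Fintype.sum_eq_single x]
    · refine Finset.sum_congr rfl fun f _ => if_congr ?_ rfl rfl
      simp [Fin.consEquiv, isStrictChain_cons, ← Fin.succ_last, and_assoc]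
    · intro y hy
      exact Finset.sum_eq_zero fun f _ => if_neg fun h => hy h.2.1
  have hright (f : Fin (n + 1) → T) :
      (if lt x (f 0) ∧ IsStrictChain lt f ∧ f (Fin.last n) = t then
        chainWt R rk (Fin.cons x f : Fin (n + 2) → T) else 0) =
      ∑ z with lt x z, ev R ^ (rk z - rk x - 1) * (if n = 0 then 1 else bv R) *
        if IsStrictChain lt f ∧ f 0 = z ∧ f (Fin.last n) = t then chainWt R rk f else 0 := by
    rw [Finset.sum_filter, Fintype.sum_eq_single (f 0) fun z hz => by simp [hz.symm], chainWt_cons]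
    simp only [true_and, mul_ite, mul_zero, ite_and]
  simp_rw [hleft, hright, chainSum_eq_sum R lt rk n, Finset.sum_filter (s := Finset.univ)
    (p := fun _ : Fin (n + 1) → T => _), Finset.mul_sum]
  exact Finset.sum_comm

theorem PsiRel_eq_sum_range [Std.Irrefl lt] {N : ℕ} (hN : Fintype.card T ≤ N) :
    PsiRel R lt rk x t = ∑ n ∈ Finset.range N, chainSum R lt rk n x t := by
  refine finsum_eq_sum_of_support_subset _ fun n hn => ?_
  rw [Finset.coe_range, Set.mem_Iio]
  by_contra h
  exact hn (chainSum_eq_zero_of_card_le R lt rk (hN.trans (not_lt.1 h)))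

theorem PsiRel_eq_sum_range_succ [Std.Irrefl lt] (hx : x ≠ t) {N : ℕ}
    (hN : Fintype.card T ≤ N) :
    PsiRel R lt rk x t = ∑ n ∈ Finset.range N, chainSum R lt rk (n + 1) x t := by
  rw [PsiRel_eq_sum_range R lt rk (Nat.le_succ_of_le hN), Finset.sum_range_succ', chainSum_zero,
    if_neg hx, add_zero]

open Classical in
theorem PsiRel_eq_sum_lt [IsStrictOrder T lt] (hx : x ≠ t) :
    PsiRel R lt rk x t = ∑ z with lt x z,
      ev R ^ (rk z - rk x - 1) * if z = t then 1 else bv R * PsiRel R lt rk z t := by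
  have hstep (z : T) : ∑ n ∈ Finset.range (Fintype.card T + 1),
      (if n = 0 then 1 else bv R) * chainSum R lt rk n z t =
        if z = t then 1 else bv R * PsiRel R lt rk z t := by
    rw [Finset.sum_range_succ', chainSum_zero]
    simp only [Nat.add_eq_zero_iff, one_ne_zero, and_false, if_false, if_true, one_mul]
    rw [← Finset.mul_sum]
    split_ifs with h
    · rw [h, Finset.sum_eq_zero fun n _ => chainSum_succ_self R lt rk, mul_zero, zero_add]
    · rw [PsiRel_eq_sum_range_succ R lt rk h le_rfl, add_zero]
  rw [PsiRel_eq_sum_range_succ R lt rk hx (Nat.le_succ _)]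
  simp_rw [chainSum_succ, mul_assoc]
  rw [Finset.sum_comm]
  simp_rw [← Finset.mul_sum, hstep]

end ChainSums

/-! ### Intervals of the Tchebyshev transform -/

section TchebyshevTransform

variable {α : Type} [PartialOrder α] [BoundedOrder α]

instance [Finite α] : Finite (TPel α) :=
  inferInstanceAs (Finite {p : WithBot α × α // p.1 < (p.2 : WithBot α)})

instance [Finite α] : Fintype (TPel α) := Fintype.ofFinite _

instance [Finite α] : Fintype (TP α) := inferInstanceAs (Fintype (Option (TPel α)))

theorem TPcov_some_some_iff {p q : TPel α} :
    TPcov α (some p) (some q) ↔ p.1.2 ⋖ q.1.2 ∧ (q.1.1 = p.1.1 ∨ q.1.1 = p.1.2) := by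
  obtain ⟨⟨x, y⟩, hxy⟩ := p
  obtain ⟨⟨x', w⟩, hxw⟩ := q
  constructor
  · rintro (⟨_, _, hc⟩ | ⟨_, _, hc⟩)
    · exact ⟨hc, Or.inr rfl⟩
    · exact ⟨hc, Or.inl rfl⟩
  · rintro ⟨hc, rfl | rfl⟩
    · exact TPcov.same hxy hxw hc
    · exact TPcov.up hxy hxw hc

theorem TPlt.zmap_lt {u v : TP α} (h : TPlt α u v) : zmap α u < zmap α v := by
  suffices hcov : ∀ u v, TPcov α u v → zmap α u < zmap α v by
    simpa only [Relation.transGen_eq_self] using Relation.TransGen.lift (zmap α) hcov _ _ h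
  intro u v huv
  cases huv with
  | up _ _ hc => exact WithTop.coe_lt_coe.2 hc.lt
  | same _ _ hc => exact WithTop.coe_lt_coe.2 hc.lt
  | top => exact WithTop.coe_lt_top _

instance : IsStrictOrder (TP α) (TPlt α) where
  irrefl _ h := h.zmap_lt.false
  trans _ _ _ := Relation.TransGen.trans

theorem TPlt.snd_lt {p q : TPel α} (h : TPlt α (some p) (some q)) : p.1.2 < q.1.2 :=
  WithTop.coe_lt_coe.1 h.zmap_lt

theorem TPlt.fst_eq_or_snd_le_fst {p q : TPel α} (h : TPlt α (some p) (some q)) :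
    q.1.1 = p.1.1 ∨ (p.1.2 : WithBot α) ≤ q.1.1 := by
  generalize hv : (some q : TP α) = v at h
  induction h generalizing q with
  | single hcov =>
    subst hv
    exact (TPcov_some_some_iff.1 hcov).2.imp_right ge_of_eq
  | @tail u v hpu hcov ih =>
    subst hv
    obtain _ | r := u
    · nomatch hcov
    · rcases (TPcov_some_some_iff.1 hcov).2 with h | h
      · rw [h]
        exact ih rfl
      · rw [h]
        exact Or.inr (WithBot.coe_le_coe.2 (TPlt.snd_lt hpu).le)

section Order

variable [LocallyFiniteOrder α]

theorem TPlt_of_fst_eq {p q : TPel α} (hfst : q.1.1 = p.1.1) (hsnd : p.1.2 < q.1.2) :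
    TPlt α (some p) (some q) := by
  obtain ⟨⟨x, y⟩, hxy⟩ := p
  obtain ⟨⟨x', w⟩, hxw⟩ := q
  obtain rfl : x' = x := hfst
  have hyw : Relation.TransGen (· ⋖ ·) y w := transGen_covBy_of_lt hsnd
  clear hsnd
  induction hyw with
  | single hc => exact .single (TPcov.same hxy hxw hc)
  | @tail z w hyz hc ih =>
    have hxz : x' < z := hxy.trans (WithBot.coe_lt_coe.2 (lt_iff_transGen_covBy.2 hyz))
    exact (ih hxz).tail (TPcov.same hxz hxw hc)

theorem TPlt_of_snd_eq_fst {p q : TPel α} (h : q.1.1 = p.1.2) : TPlt α (some p) (some q) := by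
  have hsnd : p.1.2 < q.1.2 := WithBot.coe_lt_coe.1 (h ▸ q.2)
  obtain ⟨z, hcov, hzq⟩ := exists_covBy_le_of_lt hsnd
  let r : TPel α := ⟨(p.1.2, z), WithBot.coe_lt_coe.2 hcov.lt⟩
  have hpr : TPlt α (some p) (some r) := .single (TPcov_some_some_iff.2 ⟨hcov, Or.inr rfl⟩)
  rcases hzq.eq_or_lt with rfl | hzq
  · rwa [show q = r from Subtype.ext (Prod.ext h rfl)]
  · exact hpr.trans (TPlt_of_fst_eq h hzq)

theorem TPlt_some_some_iff {p q : TPel α} :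
    TPlt α (some p) (some q) ↔
      p.1.2 < q.1.2 ∧ (q.1.1 = p.1.1 ∨ (p.1.2 : WithBot α) ≤ q.1.1) := by
  refine ⟨fun h => ⟨h.snd_lt, h.fst_eq_or_snd_le_fst⟩, ?_⟩
  rintro ⟨hsnd, hfst | hle⟩
  · exact TPlt_of_fst_eq hfst hsnd
  · obtain ⟨z, hz, hyz⟩ := WithBot.coe_le_iff.1 hle
    rcases hyz.eq_or_lt with rfl | hyz
    · exact TPlt_of_snd_eq_fst hz
    · let r : TPel α := ⟨(p.1.1, z), p.2.trans_le (hz ▸ hle)⟩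
      have hpr : TPlt α (some p) (some r) := TPlt_of_fst_eq rfl hyz
      exact hpr.trans (TPlt_of_snd_eq_fst hz)

theorem TPlt_some_none (p : TPel α) : TPlt α (some p) none := by
  have hp : p.1.1 < ((⊤ : α) : WithBot α) := p.2.trans_le (WithBot.coe_le_coe.2 le_top)
  let r : TPel α := ⟨(p.1.1, ⊤), hp⟩
  have hr : TPlt α (some r) none := .single (TPcov.top hp)
  rcases (le_top : p.1.2 ≤ ⊤).eq_or_lt with h | h
  · rwa [show p = r from Subtype.ext (Prod.ext rfl h)]
  · have hpr : TPlt α (some p) (some r) := TPlt_of_fst_eq rfl h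
    exact hpr.trans hr

open Classical in
theorem card_filter_TPlt_snd_eq [Finite α] (p : TPel α) {w : α} (hw : p.1.2 < w) :
    (Finset.univ.filter fun q : TPel α => TPlt α (some p) (some q) ∧ q.1.2 = w).card =
      (Finset.Icc p.1.2 w).card := by
  have hfst : p.1.1 ∉ (Finset.Ico p.1.2 w).map ⟨_, WithBot.coe_injective⟩ := by
    simp only [Finset.mem_map, Finset.mem_Ico, not_exists, not_and]
    exact fun z hz hzp => (p.2.trans_le (WithBot.coe_le_coe.2 hz.1)).ne' hzp
  have hcard : (Finset.Icc p.1.2 w).card =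
      (insert p.1.1 ((Finset.Ico p.1.2 w).map ⟨_, WithBot.coe_injective⟩)).card := by
    rw [Finset.card_insert_of_notMem hfst, Finset.card_map, Finset.Icc_eq_cons_Ico hw.le,
      Finset.card_cons]
  rw [hcard]
  refine Finset.card_nbij (fun q => q.1.1) ?_ ?_ ?_
  · intro q hq
    obtain ⟨-, hpq, rfl⟩ := Finset.mem_filter.1 hq
    rcases (TPlt_some_some_iff.1 hpq).2 with h | h
    · exact Finset.mem_insert.2 (Or.inl h)
    · obtain ⟨z, hz, hyz⟩ := WithBot.coe_le_iff.1 h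
      have hzq : z < q.1.2 := WithBot.coe_lt_coe.1 (hz ▸ q.2)
      exact Finset.mem_insert_of_mem
        (Finset.mem_map.2 ⟨z, Finset.mem_Ico.2 ⟨hyz, hzq⟩, hz.symm⟩)
  · intro q hq q' hq' h
    exact Subtype.ext (Prod.ext h
      ((Finset.mem_filter.1 hq).2.2.trans (Finset.mem_filter.1 hq').2.2.symm))
  · intro x hx
    have hx' : x < w ∧ (x = p.1.1 ∨ (p.1.2 : WithBot α) ≤ x) := by
      rcases Finset.mem_insert.1 hx with rfl | hx
      · exact ⟨p.2.trans (WithBot.coe_lt_coe.2 hw), Or.inl rfl⟩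
      · obtain ⟨z, hz, rfl⟩ := Finset.mem_map.1 hx
        obtain ⟨hyz, hzw⟩ := Finset.mem_Ico.1 hz
        exact ⟨WithBot.coe_lt_coe.2 hzw, Or.inr (WithBot.coe_le_coe.2 hyz)⟩
    exact ⟨⟨(x, w), hx'.1⟩, Finset.mem_filter.2
      ⟨Finset.mem_univ _, TPlt_some_some_iff.2 ⟨hw, hx'.2⟩, rfl⟩, rfl⟩

end Order

variable (R : Type) [CommRing R] (rk : α → ℕ)

/-- The ab-index of the interval `[[x,y], 1̂]` of the Tchebyshev transform, for `x = -1̂`; by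
`PsiRel_some_none` it does not depend on `x`. -/
def upperPsi (y : α) : AB R :=
  PsiRel R (TPlt α) (TPrk α rk) (some ⟨(⊥, y), WithBot.bot_lt_coe y⟩) none

variable [LocallyFiniteOrder α] [Finite α]

open Classical in
theorem PsiRel_some_none_eq_sum_TPlt (p : TPel α) :
    PsiRel R (TPlt α) (TPrk α rk) (some p) none = ev R ^ (rk ⊤ - rk p.1.2) +
      ∑ q : TPel α with TPlt α (some p) (some q),
        ev R ^ (rk q.1.2 - rk p.1.2 - 1) * bv R *
          PsiRel R (TPlt α) (TPrk α rk) (some q) none := by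
  have htop : TPrk α rk none - TPrk α rk (some p) - 1 = rk ⊤ - rk p.1.2 := by
    simp only [TPrk]
    omega
  rw [PsiRel_eq_sum_lt R (TPlt α) (TPrk α rk) (Option.some_ne_none p), Finset.sum_filter,
    Finset.sum_filter, ← htop]
  refine (Fintype.sum_option _).trans (congrArg₂ (· + ·) ?_ ?_)
  · exact (if_pos (TPlt_some_none p)).trans ((congrArg _ (if_pos rfl)).trans (mul_one _))
  · refine Finset.sum_congr rfl fun q _ => if_congr Iff.rfl ?_ rfl
    exact (congrArg _ (if_neg (Option.some_ne_none q))).trans (mul_assoc _ _ _).symm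

variable {R rk} in
theorem PsiRel_some_none_eq_sum_Ioi {p : TPel α} {f : α → AB R}
    (hf : ∀ q : TPel α, p.1.2 < q.1.2 →
      PsiRel R (TPlt α) (TPrk α rk) (some q) none = f q.1.2) :
    PsiRel R (TPlt α) (TPrk α rk) (some p) none = ev R ^ (rk ⊤ - rk p.1.2) +
      ∑ w ∈ Finset.Ioi p.1.2,
        (Finset.Icc p.1.2 w).card • (ev R ^ (rk w - rk p.1.2 - 1) * bv R * f w) := by
  classical
  rw [PsiRel_some_none_eq_sum_TPlt,
    ← Finset.sum_fiberwise_of_maps_to (t := Finset.Ioi p.1.2) (g := fun q => q.1.2)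
      fun q hq => Finset.mem_Ioi.2 (TPlt.snd_lt (Finset.mem_filter.1 hq).2)]
  congr 1
  refine Finset.sum_congr rfl fun w hw => ?_
  rw [← card_filter_TPlt_snd_eq p (Finset.mem_Ioi.1 hw), ← Finset.sum_const, Finset.filter_filter]
  refine Finset.sum_congr rfl fun q hq => ?_
  obtain ⟨-, hpq, rfl⟩ := Finset.mem_filter.1 hq
  rw [hf q hpq.snd_lt]

theorem PsiRel_some_none (p : TPel α) :
    PsiRel R (TPlt α) (TPrk α rk) (some p) none = upperPsi R rk p.1.2 := by
  induction hy : p.1.2 using WellFoundedGT.induction generalizing p with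
  | ind y ih =>
    subst hy
    have hf (q : TPel α) (hq : p.1.2 < q.1.2) := ih q.1.2 hq q rfl
    exact (PsiRel_some_none_eq_sum_Ioi hf).trans
      (PsiRel_some_none_eq_sum_Ioi (p := ⟨(⊥, p.1.2), WithBot.bot_lt_coe _⟩) hf).symm

theorem upperPsi_eq_sum_Ioi (y : α) :
    upperPsi R rk y = ev R ^ (rk ⊤ - rk y) + ∑ w ∈ Finset.Ioi y,
      (Finset.Icc y w).card • (ev R ^ (rk w - rk y - 1) * bv R * upperPsi R rk w) :=
  PsiRel_some_none_eq_sum_Ioi fun q _ => PsiRel_some_none R rk q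

end TchebyshevTransform

/-! ### Inverting the recursion over an Eulerian poset -/

section Eulerian

variable {α : Type} [PartialOrder α] [LocallyFiniteOrder α] {rk : α → ℕ}

theorem IsEulerian.sum_Icc_neg_one_pow (heu : IsEulerian α rk) {x y : α} (h : x < y) :
    ∑ z ∈ Finset.Icc x y, (-1 : ℤ) ^ rk z = 0 := by
  classical
  have hncard (p : α → Prop) [DecidablePred p] :
      Set.ncard {z | x ≤ z ∧ z ≤ y ∧ p z} = ((Finset.Icc x y).filter p).card := by
    rw [← Set.ncard_coe_finset]
    congr 1
    ext z
    simp [and_assoc]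
  have hcard := heu x y h
  rw [hncard, hncard] at hcard
  simp_rw [neg_one_pow_eq_ite]
  rw [Finset.sum_ite, Finset.sum_const, Finset.sum_const, hcard]
  simp

theorem IsEulerian.sum_Icc_neg_one_pow_sub [DecidableEq α] (heu : IsEulerian α rk)
    (hrk : Monotone rk) (x y : α) :
    ∑ z ∈ Finset.Icc x y, (-1 : ℤ) ^ (rk z - rk x) = if x = y then 1 else 0 := by
  have hsign : ∑ z ∈ Finset.Icc x y, (-1 : ℤ) ^ (rk z - rk x) =
      (-1) ^ rk x * ∑ z ∈ Finset.Icc x y, (-1 : ℤ) ^ rk z := by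
    rw [Finset.mul_sum]
    refine Finset.sum_congr rfl fun z hz => ?_
    obtain ⟨k, hk⟩ := Nat.exists_eq_add_of_le (hrk (Finset.mem_Icc.1 hz).1)
    rw [hk, Nat.add_sub_cancel_left, pow_add, ← mul_assoc, ← mul_pow]
    simp
  by_cases hxy : x ≤ y
  · rcases hxy.eq_or_lt with rfl | h
    · simp
    · rw [hsign, heu.sum_Icc_neg_one_pow h, mul_zero, if_neg h.ne]
  · rw [Finset.Icc_eq_empty hxy, Finset.sum_empty, if_neg fun h => hxy h.le]

theorem IsEulerian.sum_Icc_neg_one_pow_mul_card (heu : IsEulerian α rk) (hrk : Monotone rk)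
    {x y : α} (h : x ≤ y) :
    ∑ z ∈ Finset.Icc x y, (-1 : ℤ) ^ (rk z - rk x) * (Finset.Icc z y).card = 1 := by
  classical
  calc ∑ z ∈ Finset.Icc x y, (-1 : ℤ) ^ (rk z - rk x) * (Finset.Icc z y).card
      = ∑ z ∈ Finset.Icc x y, ∑ _v ∈ Finset.Icc z y, (-1 : ℤ) ^ (rk z - rk x) :=
        Finset.sum_congr rfl fun z _ => by rw [Finset.sum_const, nsmul_eq_mul, mul_comm]
    _ = ∑ v ∈ Finset.Icc x y, ∑ z ∈ Finset.Icc x v, (-1 : ℤ) ^ (rk z - rk x) := by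
        refine Finset.sum_comm' fun z v => ?_
        simp only [Finset.mem_Icc]
        exact ⟨fun ⟨⟨h1, _⟩, h3, h4⟩ => ⟨⟨h1, h3⟩, h1.trans h3, h4⟩,
          fun ⟨⟨h1, h2⟩, _, h4⟩ => ⟨⟨h1, h2.trans h4⟩, h2, h4⟩⟩
    _ = 1 := by
        simp_rw [heu.sum_Icc_neg_one_pow_sub hrk, Finset.sum_ite_eq]
        exact if_pos (Finset.left_mem_Icc.2 h)

theorem IsEulerian.sum_Ico_neg_one_pow_mul_card (heu : IsEulerian α rk) (hrk : Monotone rk)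
    {x y : α} (h : x ≤ y) :
    ∑ z ∈ Finset.Ico x y, (-1 : ℤ) ^ (rk z - rk x) * (Finset.Icc z y).card =
      1 - (-1) ^ (rk y - rk x) := by
  have hIcc := heu.sum_Icc_neg_one_pow_mul_card hrk h
  rw [Finset.Icc_eq_cons_Ico h, Finset.sum_cons, Finset.Icc_self, Finset.card_singleton,
    Nat.cast_one, mul_one] at hIcc
  exact eq_sub_of_add_eq' hIcc

variable [OrderTop α] {A : Type} [Ring A] {e b : A} {g : α → A}

open Classical in
theorem IsEulerian.sum_Ici_neg_one_pow_smul (heu : IsEulerian α rk) (hrk : StrictMono rk)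
    (hg : ∀ y, g y = e ^ (rk ⊤ - rk y) + ∑ w ∈ Finset.Ioi y,
      (Finset.Icc y w).card • (e ^ (rk w - rk y - 1) * b * g w)) (y : α) :
    ∑ w ∈ Finset.Ici y, (-1 : ℤ) ^ (rk w - rk y) • (e ^ (rk w - rk y) * g w) =
      (if y = ⊤ then 1 else 0) + ∑ v ∈ Finset.Ioi y,
        (1 - (-1 : ℤ) ^ (rk v - rk y)) • (e ^ (rk v - rk y - 1) * b * g v) := by
  have hpow {w : α} (hw : w ∈ Finset.Ici y) :
      e ^ (rk w - rk y) * g w = e ^ (rk ⊤ - rk y) + ∑ v ∈ Finset.Ioi w,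
        ((Finset.Icc w v).card : ℤ) • (e ^ (rk v - rk y - 1) * b * g v) := by
    have hyw := hrk.monotone (Finset.mem_Ici.1 hw)
    have hwt := hrk.monotone (le_top (a := w))
    rw [hg w, mul_add, ← pow_add, Finset.mul_sum]
    congr 1
    · congr 1
      omega
    · refine Finset.sum_congr rfl fun v hv => ?_
      have hwv := hrk (Finset.mem_Ioi.1 hv)
      rw [natCast_zsmul, mul_smul_comm, ← mul_assoc, ← mul_assoc, ← pow_add]
      congr 4
      omega
  have hfirst : ∑ w ∈ Finset.Ici y, (-1 : ℤ) ^ (rk w - rk y) • e ^ (rk ⊤ - rk y) =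
      if y = ⊤ then 1 else 0 := by
    rw [← Finset.sum_smul, ← Finset.Icc_top, heu.sum_Icc_neg_one_pow_sub hrk.monotone]
    split_ifs with h <;> simp [h]
  have hsecond : ∑ w ∈ Finset.Ici y, (-1 : ℤ) ^ (rk w - rk y) • ∑ v ∈ Finset.Ioi w,
        ((Finset.Icc w v).card : ℤ) • (e ^ (rk v - rk y - 1) * b * g v) =
      ∑ v ∈ Finset.Ioi y, (1 - (-1 : ℤ) ^ (rk v - rk y)) •
        (e ^ (rk v - rk y - 1) * b * g v) := by
    simp_rw [Finset.smul_sum, smul_smul]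
    rw [Finset.sum_comm' (t' := Finset.Ioi y) (s' := fun v => Finset.Ico y v)]
    · refine Finset.sum_congr rfl fun v hv => ?_
      rw [← Finset.sum_smul,
        heu.sum_Ico_neg_one_pow_mul_card hrk.monotone (Finset.mem_Ioi.1 hv).le]
    · intro w v
      simp only [Finset.mem_Ici, Finset.mem_Ioi, Finset.mem_Ico]
      exact ⟨fun ⟨h1, h2⟩ => ⟨⟨h1, h2⟩, h1.trans_lt h2⟩, fun h => h.1⟩
  rw [← hfirst, ← hsecond, ← Finset.sum_add_distrib]
  exact Finset.sum_congr rfl fun w hw => by rw [hpow hw, smul_add]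

open Classical in
theorem IsEulerian.eq_sum_Ioi_ite_odd (heu : IsEulerian α rk) (hrk : StrictMono rk)
    (hg : ∀ y, g y = e ^ (rk ⊤ - rk y) + ∑ w ∈ Finset.Ioi y,
      (Finset.Icc y w).card • (e ^ (rk w - rk y - 1) * b * g w)) (y : α) :
    g y = (if y = ⊤ then 1 else 0) + ∑ w ∈ Finset.Ioi y,
      if Odd (rk w - rk y) then e ^ (rk w - rk y - 1) * ((e + 2 * b) * g w)
      else -(e ^ (rk w - rk y) * g w) := by
  have hsum := heu.sum_Ici_neg_one_pow_smul hrk hg y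
  rw [Finset.Ici_eq_cons_Ioi, Finset.sum_cons, Nat.sub_self, pow_zero, pow_zero, one_smul, one_mul,
    ← eq_sub_iff_add_eq, add_sub_assoc, ← Finset.sum_sub_distrib] at hsum
  rw [hsum]
  congr 1
  refine Finset.sum_congr rfl fun w _ => ?_
  split_ifs with hodd
  · have hsucc : e ^ (rk w - rk y) = e ^ (rk w - rk y - 1) * e := by
      rw [← pow_succ, Nat.sub_add_cancel hodd.pos]
    rw [hodd.neg_one_pow, hsucc]
    noncomm_ring
  · rw [(Nat.not_odd_iff_even.1 hodd).neg_one_pow]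
    simp

theorem IsEulerian.mem_subring [WellFoundedGT α] (heu : IsEulerian α rk) (hrk : StrictMono rk)
    (hg : ∀ y, g y = e ^ (rk ⊤ - rk y) + ∑ w ∈ Finset.Ioi y,
      (Finset.Icc y w).card • (e ^ (rk w - rk y - 1) * b * g w))
    {S : Subring A} (hee : e * e ∈ S) (heb : e + 2 * b ∈ S) (y : α) : g y ∈ S := by
  classical
  have heven {n : ℕ} (hn : Even n) : e ^ n ∈ S := by
    obtain ⟨k, rfl⟩ := hn
    rw [← two_mul, pow_mul, sq]
    exact pow_mem hee k
  induction y using WellFoundedGT.induction with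
  | ind y ih =>
    rw [heu.eq_sum_Ioi_ite_odd hrk hg y]
    refine add_mem (by split_ifs <;> simp) (sum_mem fun w hw => ?_)
    have hw := ih w (Finset.mem_Ioi.1 hw)
    split_ifs with hodd
    · exact mul_mem (heven (Nat.Odd.sub_odd hodd odd_one)) (mul_mem heb hw)
    · exact neg_mem (mul_mem (heven (Nat.not_odd_iff_even.1 hodd)) hw)

end Eulerian

theorem IsRankFun.strictMono {α : Type} [PartialOrder α] [OrderBot α] [LocallyFiniteOrder α]
    {rk : α → ℕ} (hrk : IsRankFun α rk) : StrictMono rk :=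
  (strictMono_iff_forall_covBy rk).2 fun x y h => (hrk.2 x y h).symm ▸ Nat.lt_succ_self _

section C2d

variable (R : Type) [CommRing R]

theorem ev_mul_ev_eq : ev R * ev R = cv R * cv R - 2 * dv R := by
  unfold ev cv dv
  noncomm_ring

theorem ev_add_two_mul_bv : ev R + 2 * bv R = cv R := by
  unfold ev cv
  noncomm_ring

theorem tchebyshev_c2d_index_general (α : Type) [Finite α] [PartialOrder α] [BoundedOrder α]
    (rk : α → ℕ) (hrk : StrictMono rk) (heu : IsEulerian α rk) :
    PsiRel R (TPlt α) (TPrk α rk) (TPbot α) (TPtop α) ∈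
      Subring.closure ({cv R, 2 * dv R} : Set (AB R)) := by
  classical
  cases nonempty_fintype α
  let _ : LocallyFiniteOrder α := Fintype.toLocallyFiniteOrder
  have hc : cv R ∈ Subring.closure ({cv R, 2 * dv R} : Set (AB R)) :=
    Subring.subset_closure (Set.mem_insert _ _)
  have hd : 2 * dv R ∈ Subring.closure ({cv R, 2 * dv R} : Set (AB R)) :=
    Subring.subset_closure (Set.mem_insert_of_mem _ rfl)
  refine heu.mem_subring (g := upperPsi R rk) hrk (upperPsi_eq_sum_Ioi R rk) ?_ ?_ ⊥
  · rw [ev_mul_ev_eq]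
    exact sub_mem (mul_mem hc hc) hd
  · rwa [ev_add_two_mul_bv]

end C2d

theorem tchebyshev_c2d_index
    (α : Type) [Fintype α] [PartialOrder α] [BoundedOrder α]
    (rk : α → ℕ) (hrk : IsRankFun α rk) (heu : IsEulerian α rk) :
    PsiRel ℤ (TPlt α) (TPrk α rk) (TPbot α) (TPtop α) ∈
      Subring.closure ({cv ℤ, 2 * dv ℤ} : Set (AB ℤ)) := by
  classical
  let _ : LocallyFiniteOrder α := Fintype.toLocallyFiniteOrder
  exact tchebyshev_c2d_index_general ℤ α rk hrk.strictMono heu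

end Tcheb
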